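/- Let $*_\mu$ be the Kingman–Bessel convolution on $M^1([0,\infty))$ (defined on point measures by $(\delta_r *_\mu \delta_s)(f) = \frac{1}{\kappa_\mu}\int_{-1}^1 f(\sqrt{r^2+s^2+2rsv})(1-v^2)^{\mu-3/2}dv$ and extended bilinearly), and let $\bullet$ be the convolution with $(\delta_r \bullet \delta_s)(f) = f(\sqrt{r^2+s^2})$. Then there is a universal constant $C$ such that for all probability measures $\nu_1,\nu_2$ on $[0,\infty)$ with finite first moments $m_1(\nu_i) = \int_0^\infty x\,d\nu_i(x)$, all $\mu \ge 3$, and every root-Lipschitz function $f$ with constant $L$: $|\nu_1 *_\mu \nu_2(f) - \nu_1 \bullet \nu_2(f)| \le C L\, m_1(\nu_1)\,m_1(\nu_2)/\sqrt{\mu}$. -/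

import Mathlib

open MeasureTheory Filter ProbabilityTheory

/-- The Kingman–Bessel normalization constant `κ_μ = ∫_{-1}^1 (1-v²)^{μ-3/2} dv`. -/
noncomputable def kappa (μ : ℝ) : ℝ := ∫ v in Set.Icc (-1 : ℝ) 1, (1 - v ^ 2) ^ (μ - 3 / 2)

/-- The Kingman–Bessel convolution of two point measures `δ_r *_μ δ_s`:
`(δ_r *_μ δ_s)(f) = κ_μ⁻¹ ∫_{-1}^1 f(√(r²+s²+2rsv)) (1-v²)^{μ-3/2} dv`. -/
noncomputable def kingmanKernel (μ r s : ℝ) : Measure ℝ :=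
  (ENNReal.ofReal (kappa μ))⁻¹ •
    Measure.map (fun v => Real.sqrt (r ^ 2 + s ^ 2 + 2 * r * s * v))
      ((volume.restrict (Set.Icc (-1 : ℝ) 1)).withDensity
        fun v => ENNReal.ofReal ((1 - v ^ 2) ^ (μ - 3 / 2)))

/-- The Kingman–Bessel convolution of two measures on `[0,∞)`. -/
noncomputable def kingmanConv (μ : ℝ) (ν₁ ν₂ : Measure ℝ) : Measure ℝ :=
  ν₁.bind fun r => ν₂.bind fun s => kingmanKernel μ r s

/-- The degenerate convolution `•` with `(δ_r • δ_s)(f) = f(√(r²+s²))`. -/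
noncomputable def bulletConv (ν₁ ν₂ : Measure ℝ) : Measure ℝ :=
  Measure.map (fun p : ℝ × ℝ => Real.sqrt (p.1 ^ 2 + p.2 ^ 2)) (ν₁.prod ν₂)

/-- `n`-fold Kingman–Bessel convolution power `ν^{(n,*_μ)}`. -/
noncomputable def kingmanPow (μ : ℝ) (ν : Measure ℝ) : ℕ → Measure ℝ
  | 0 => Measure.dirac 0
  | n + 1 => kingmanConv μ ν (kingmanPow μ ν n)

/-- `n`-fold `•`-convolution power `ν^{(n,•)}`. -/
noncomputable def bulletPow (ν : Measure ℝ) : ℕ → Measure ℝ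
  | 0 => Measure.dirac 0
  | n + 1 => bulletConv ν (bulletPow ν n)

/-!
Let `V` have density proportional to `(1 - v²)^{μ - 3/2}` on `[-1, 1]`, independently of
`(R, S) ∼ ν₁ ⊗ ν₂`. Then `√(R² + S² + 2RSV) ∼ ν₁ *_μ ν₂` and `√(R² + S²) ∼ ν₁ • ν₂`, and for a
root-Lipschitz `f` the values at these two points differ by at most `2L|R||S||V|`, of mean
`2L E|R| E|S| E|V|`. Integrating the derivative of `v (1 - v²)^{μ - 1/2}` gives `E V² = 1 / (2μ)`,
hence `E|V| ≤ 1 / √(2μ)`.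
-/

section General

variable {α β γ : Type*} [MeasurableSpace α] [MeasurableSpace β] [MeasurableSpace γ]

lemma bind_map_prodMk (ν : Measure α) (ρ : Measure β) [SFinite ρ] {T : α × β → γ}
    (hT : Measurable T) :
    (ν.bind fun x => ρ.map fun y => T (x, y)) = (ν.prod ρ).map T := by
  have map_apply_section (x : α) {t : Set γ} (ht : MeasurableSet t) :
      ρ.map (fun y => T (x, y)) t = ρ (Prod.mk x ⁻¹' (T ⁻¹' t)) :=
    Measure.map_apply (by fun_prop) ht
  have measurable_section : Measurable fun x => ρ.map fun y => T (x, y) :=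
    Measure.measurable_of_measurable_coe _ fun t ht => by
      simpa only [map_apply_section _ ht] using measurable_measure_prodMk_left (hT ht)
  ext t ht
  rw [Measure.bind_apply ht measurable_section.aemeasurable, Measure.map_apply hT ht,
    Measure.prod_apply (hT ht)]
  simp only [map_apply_section _ ht]

lemma norm_integral_sub_integral_le {E : Type*} [NormedAddCommGroup E] [NormedSpace ℝ E]
    {P : Measure α} {F G : α → E} {g : α → ℝ} (hFG : AEStronglyMeasurable (F - G) P)
    (hg : Integrable g P) (hle : ∀ᵐ p ∂P, ‖F p - G p‖ ≤ g p) :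
    ‖(∫ p, F p ∂P) - ∫ p, G p ∂P‖ ≤ ∫ p, g p ∂P := by
  have integrable_sub : Integrable (F - G) P := hg.mono' hFG hle
  by_cases hG : Integrable G P
  · have hF : Integrable F P := by simpa using integrable_sub.add hG
    rw [← integral_sub hF hG]
    exact norm_integral_le_of_norm_le hg hle
  · -- The integrals of `F` and `G` are then both undefined, hence `0`.
    have hF : ¬ Integrable F P := fun hF => hG (by simpa using hF.sub integrable_sub)
    rw [integral_undef hF, integral_undef hG, sub_zero, norm_zero]
    exact integral_nonneg_of_ae (hle.mono fun p hp => (norm_nonneg _).trans hp)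

lemma integral_abs_le_sqrt_integral_sq {P : Measure α} [IsProbabilityMeasure P] {X : α → ℝ}
    (hX : MemLp X 2 P) : ∫ p, |X p| ∂P ≤ √(∫ p, X p ^ 2 ∂P) := by
  apply Real.le_sqrt_of_sq_le
  have h := variance_nonneg |X| P
  rw [variance_eq_sub hX.abs] at h
  simpa using h

lemma integral_abs_of_Iio_null {ν : Measure ℝ} (hν : ν (Set.Iio 0) = 0) :
    ∫ x, |x| ∂ν = ∫ x, x ∂ν := by
  refine integral_congr_ae ?_
  filter_upwards [measure_eq_zero_iff_ae_notMem.1 hν] with x hx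
  exact abs_of_nonneg (not_lt.1 hx)

end General

section GegenbauerWeight

variable {a : ℝ}

lemma one_sub_sq_rpow_nonneg (a : ℝ) {v : ℝ} (hv : v ∈ Set.Icc (-1) 1) : 0 ≤ (1 - v ^ 2) ^ a :=
  Real.rpow_nonneg (sub_nonneg.2 (sq_le_one_iff_abs_le_one v |>.2 (abs_le.2 hv))) a

lemma intervalIntegrable_one_sub_sq_rpow (ha : -1 < a) :
    IntervalIntegrable (fun v : ℝ => (1 - v ^ 2) ^ a) volume (-1) 1 := by
  have right_half : IntervalIntegrable (fun v : ℝ => (1 - v ^ 2) ^ a) volume 0 1 := by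
    have h_sub : IntervalIntegrable (fun v : ℝ => (1 - v) ^ a) volume 0 1 := by
      simpa using
        (intervalIntegral.intervalIntegrable_rpow' (a := 1) (b := 0) ha).comp_sub_left 1
    have h_add : ContinuousOn (fun v : ℝ => (1 + v) ^ a) (Set.uIcc 0 1) := by
      refine ContinuousOn.rpow_const (by fun_prop) fun v hv => Or.inl ?_
      rw [Set.uIcc_of_le zero_le_one] at hv
      linarith [hv.1]
    refine (h_sub.mul_continuousOn h_add).congr fun v hv => ?_
    rw [Set.uIoc_of_le zero_le_one] at hv
    rw [← Real.mul_rpow (by linarith [hv.2]) (by linarith [hv.1])]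
    ring_nf
  have left_half : IntervalIntegrable (fun v : ℝ => (1 - v ^ 2) ^ a) volume (-1) 0 := by
    simpa using right_half.comp_sub_left 0 |>.symm
  exact left_half.trans right_half

lemma integral_one_sub_sq_rpow_pos (ha : -1 < a) : 0 < ∫ v in (-1 : ℝ)..1, (1 - v ^ 2) ^ a :=
  intervalIntegral.intervalIntegral_pos_of_pos_on (intervalIntegrable_one_sub_sq_rpow ha)
    (fun v hv => Real.rpow_pos_of_pos (by nlinarith [hv.1, hv.2]) a) (by norm_num)

lemma hasDerivAt_mul_one_sub_sq_rpow {v : ℝ} (hv : v ∈ Set.Ioo (-1) 1) :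
    HasDerivAt (fun v : ℝ => v * (1 - v ^ 2) ^ (a + 1))
      ((1 - v ^ 2) ^ a - (2 * a + 3) * (v ^ 2 * (1 - v ^ 2) ^ a)) v := by
  have h_pos : 0 < 1 - v ^ 2 := by nlinarith [hv.1, hv.2]
  have h_inner : HasDerivAt (fun v : ℝ => 1 - v ^ 2) (-(2 * v)) v := by
    simpa using (hasDerivAt_pow 2 v).const_sub 1
  refine ((hasDerivAt_id' v).mul
    (h_inner.rpow_const (p := a + 1) (Or.inl h_pos.ne'))).congr_deriv ?_
  rw [add_sub_cancel_right, Real.rpow_add_one h_pos.ne']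
  ring

lemma integral_sq_mul_one_sub_sq_rpow (ha : -1 < a) :
    (2 * a + 3) * ∫ v in (-1 : ℝ)..1, v ^ 2 * (1 - v ^ 2) ^ a =
      ∫ v in (-1 : ℝ)..1, (1 - v ^ 2) ^ a := by
  have h_weight := intervalIntegrable_one_sub_sq_rpow ha
  have h_second : IntervalIntegrable
      (fun v : ℝ => (2 * a + 3) * (v ^ 2 * (1 - v ^ 2) ^ a)) volume (-1) 1 :=
    (h_weight.continuousOn_mul (by fun_prop)).const_mul _
  have h_cont : Continuous fun v : ℝ => v * (1 - v ^ 2) ^ (a + 1) :=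
    continuous_id.mul (Continuous.rpow_const (by fun_prop) fun _ => Or.inr (by linarith))
  have h_ftc := intervalIntegral.integral_eq_sub_of_hasDerivAt_of_le (by norm_num)
    h_cont.continuousOn (fun v hv => hasDerivAt_mul_one_sub_sq_rpow hv) (h_weight.sub h_second)
  rw [intervalIntegral.integral_sub h_weight h_second, intervalIntegral.integral_const_mul] at h_ftc
  refine (sub_eq_zero.1 (h_ftc.trans ?_)).symm
  norm_num [Real.zero_rpow (by linarith : a + 1 ≠ 0)]

end GegenbauerWeight

/-- The symmetric beta (ultraspherical) law, the probability measure with density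
`κ_μ⁻¹ (1 - v²)^{μ - 3/2}` on `[-1, 1]`. When `2μ` is an integer at least `2`, it is the law of the
cosine of the angle between two independent uniform directions in `ℝ^{2μ}`. It is a probability
measure only for `1/2 < μ`: below, `κ_μ` diverges and `kappa μ` is the junk value `0`. -/
noncomputable def ultraspherical (μ : ℝ) : Measure ℝ :=
  (ENNReal.ofReal (kappa μ))⁻¹ •
    (volume.restrict (Set.Icc (-1 : ℝ) 1)).withDensity
      fun v => ENNReal.ofReal ((1 - v ^ 2) ^ (μ - 3 / 2))

section Ultraspherical

variable {μ : ℝ}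

lemma kappa_eq_intervalIntegral (μ : ℝ) :
    kappa μ = ∫ v in (-1 : ℝ)..1, (1 - v ^ 2) ^ (μ - 3 / 2) := by
  rw [kappa, integral_Icc_eq_integral_Ioc, ← intervalIntegral.integral_of_le (by norm_num)]

lemma kappa_pos (hμ : 1 / 2 < μ) : 0 < kappa μ := by
  rw [kappa_eq_intervalIntegral]
  exact integral_one_sub_sq_rpow_pos (by linarith)

lemma isProbabilityMeasure_ultraspherical (hμ : 1 / 2 < μ) :
    IsProbabilityMeasure (ultraspherical μ) := by
  have h_int : IntegrableOn (fun v : ℝ => (1 - v ^ 2) ^ (μ - 3 / 2)) (Set.Icc (-1) 1) := by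
    rw [← intervalIntegrable_iff_integrableOn_Icc_of_le (by norm_num)]
    exact intervalIntegrable_one_sub_sq_rpow (by linarith)
  have h_mass : ∫⁻ v in Set.Icc (-1 : ℝ) 1, ENNReal.ofReal ((1 - v ^ 2) ^ (μ - 3 / 2)) =
      ENNReal.ofReal (kappa μ) :=
    (ofReal_integral_eq_lintegral_ofReal h_int
      (ae_restrict_of_forall_mem measurableSet_Icc fun _ => one_sub_sq_rpow_nonneg _)).symm
  constructor
  rw [ultraspherical, Measure.smul_apply, withDensity_apply _ MeasurableSet.univ,
    Measure.restrict_univ, h_mass, smul_eq_mul]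
  exact ENNReal.inv_mul_cancel (by simpa using kappa_pos hμ) ENNReal.ofReal_ne_top

lemma ae_mem_Icc_ultraspherical (μ : ℝ) : ∀ᵐ v ∂ultraspherical μ, v ∈ Set.Icc (-1 : ℝ) 1 :=
  Measure.ae_smul_measure
    ((withDensity_absolutelyContinuous _ _).ae_le (ae_restrict_mem measurableSet_Icc)) _

lemma integral_ultraspherical (μ : ℝ) (g : ℝ → ℝ) :
    ∫ v, g v ∂ultraspherical μ =
      (kappa μ)⁻¹ * ∫ v in (-1 : ℝ)..1, g v * (1 - v ^ 2) ^ (μ - 3 / 2) := by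
  have kappa_nonneg : 0 ≤ kappa μ :=
    setIntegral_nonneg measurableSet_Icc fun _ => one_sub_sq_rpow_nonneg _
  rw [ultraspherical, integral_smul_measure, integral_withDensity_eq_integral_toReal_smul
      (by fun_prop) (ae_of_all _ fun _ => ENNReal.ofReal_lt_top), ENNReal.toReal_inv,
    ENNReal.toReal_ofReal kappa_nonneg, smul_eq_mul,
    intervalIntegral.integral_of_le (by norm_num), ← integral_Icc_eq_integral_Ioc]
  congr 1
  refine setIntegral_congr_fun measurableSet_Icc fun v hv => ?_
  simp only [smul_eq_mul, ENNReal.toReal_ofReal (one_sub_sq_rpow_nonneg _ hv), mul_comm]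

lemma integral_sq_ultraspherical (hμ : 1 / 2 < μ) :
    ∫ v, v ^ 2 ∂ultraspherical μ = 1 / (2 * μ) := by
  have h := integral_sq_mul_one_sub_sq_rpow (a := μ - 3 / 2) (by linarith)
  rw [← kappa_eq_intervalIntegral] at h
  have hκ := kappa_pos hμ
  rw [integral_ultraspherical, inv_mul_eq_div, div_eq_div_iff hκ.ne' (by linarith)]
  linarith

lemma memLp_id_ultraspherical (hμ : 1 / 2 < μ) (p : ENNReal) :
    MemLp (fun v => v) p (ultraspherical μ) := by
  have := isProbabilityMeasure_ultraspherical hμ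
  exact MemLp.of_bound (by fun_prop) 1 ((ae_mem_Icc_ultraspherical μ).mono fun v => abs_le.2)

lemma integral_abs_ultraspherical_le (hμ : 1 / 2 < μ) :
    ∫ v, |v| ∂ultraspherical μ ≤ 1 / √(2 * μ) := by
  have := isProbabilityMeasure_ultraspherical hμ
  simpa [integral_sq_ultraspherical hμ] using
    integral_abs_le_sqrt_integral_sq (memLp_id_ultraspherical hμ 2)

end Ultraspherical

lemma kingmanKernel_eq_map (μ r s : ℝ) :
    kingmanKernel μ r s =
      (ultraspherical μ).map fun v => √(r ^ 2 + s ^ 2 + 2 * r * s * v) := by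
  rw [kingmanKernel, ultraspherical, Measure.map_smul]

lemma kingmanConv_eq_map (μ : ℝ) (ν₁ ν₂ : Measure ℝ) [SFinite ν₂] :
    kingmanConv μ ν₁ ν₂ = (ν₁.prod (ν₂.prod (ultraspherical μ))).map
      fun p => √(p.1 ^ 2 + p.2.1 ^ 2 + 2 * p.1 * p.2.1 * p.2.2) := by
  have : SFinite (ultraspherical μ) := by unfold ultraspherical; infer_instance
  have bind_kernel (r : ℝ) : (ν₂.bind fun s => kingmanKernel μ r s) =
      (ν₂.prod (ultraspherical μ)).map
        fun q => √(r ^ 2 + q.1 ^ 2 + 2 * r * q.1 * q.2) := by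
    simp only [kingmanKernel_eq_map]
    exact bind_map_prodMk ν₂ (ultraspherical μ)
      (T := fun q => √(r ^ 2 + q.1 ^ 2 + 2 * r * q.1 * q.2)) (by fun_prop)
  simp only [kingmanConv, bind_kernel]
  exact bind_map_prodMk ν₁ (ν₂.prod (ultraspherical μ))
    (T := fun p => √(p.1 ^ 2 + p.2.1 ^ 2 + 2 * p.1 * p.2.1 * p.2.2)) (by fun_prop)

lemma bulletConv_eq_map {α : Type*} [MeasurableSpace α] (ν₁ ν₂ : Measure ℝ) [SFinite ν₁]
    [SFinite ν₂] (ρ : Measure α) [IsProbabilityMeasure ρ] :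
    bulletConv ν₁ ν₂ =
      (ν₁.prod (ν₂.prod ρ)).map fun p => √(p.1 ^ 2 + p.2.1 ^ 2) := by
  have forget : (ν₁.prod (ν₂.prod ρ)).map (Prod.map id Prod.fst) = ν₁.prod ν₂ := by
    rw [← Measure.map_prod_map _ _ measurable_id measurable_fst, Measure.map_id,
      Measure.map_fst_prod, measure_univ, one_smul]
  rw [bulletConv, ← forget, Measure.map_map (by fun_prop) (by fun_prop)]
  rfl

/-- `f` is root-Lipschitz with constant `L`: `x ↦ f (√x)` is `L`-Lipschitz on `[0, ∞)`. The values
of `f` on `(-∞, 0)` are irrelevant. -/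
def RootLipschitz (L : ℝ) (f : ℝ → ℝ) : Prop :=
  ∀ x y : ℝ, 0 ≤ x → 0 ≤ y → |f (√x) - f (√y)| ≤ L * |x - y|

namespace RootLipschitz

variable {L : ℝ} {f : ℝ → ℝ}

lemma nonneg (hf : RootLipschitz L f) : 0 ≤ L := by
  simpa using (abs_nonneg _).trans (hf 0 1 le_rfl zero_le_one)

lemma continuous_comp_sqrt (hf : RootLipschitz L f) : Continuous fun x => f (√x) := by
  have h_on : ContinuousOn (fun x => f (√x)) (Set.Ici 0) :=
    LipschitzOnWith.continuousOn (K := ⟨L, hf.nonneg⟩)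
      (.of_dist_le_mul fun x hx y hy => hf x y hx hy)
  have h_max : (fun x => f (√x)) = fun x => f (√(max x 0)) := by
    funext x
    rcases le_total x 0 with hx | hx <;> simp [hx, Real.sqrt_eq_zero_of_nonpos]
  rw [h_max]
  exact h_on.comp_continuous (by fun_prop) fun x => le_max_right x 0

lemma integral_map_sqrt {α : Type*} [MeasurableSpace α] (hf : RootLipschitz L f) {P : Measure α}
    {q : α → ℝ} (hq : Measurable q) :
    ∫ x, f x ∂P.map (fun p => √(q p)) = ∫ p, f (√(q p)) ∂P := by
  have h_nonneg : ∀ᵐ x ∂P.map (fun p => √(q p)), 0 ≤ x :=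
    (ae_map_iff (by fun_prop) measurableSet_Ici).2 (ae_of_all _ fun p => Real.sqrt_nonneg _)
  have h_meas : AEStronglyMeasurable f (P.map fun p => √(q p)) := by
    refine (hf.continuous_comp_sqrt.comp (continuous_pow 2)).aestronglyMeasurable.congr ?_
    filter_upwards [h_nonneg] with x hx
    simp [Real.sqrt_sq hx]
  exact integral_map (by fun_prop) h_meas

lemma abs_sub_le (hf : RootLipschitz L f) (r s : ℝ) {v : ℝ} (hv : v ∈ Set.Icc (-1) 1) :
    |f (√(r ^ 2 + s ^ 2 + 2 * r * s * v)) - f (√(r ^ 2 + s ^ 2))| ≤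
      2 * L * (|r| * (|s| * |v|)) := by
  have h_nonneg : 0 ≤ r ^ 2 + s ^ 2 + 2 * r * s * v := by
    nlinarith [mul_nonneg (sub_nonneg.2 hv.2) (sq_nonneg (r - s)),
      mul_nonneg (neg_le_iff_add_nonneg.1 hv.1) (sq_nonneg (r + s))]
  refine (hf _ _ h_nonneg (by positivity)).trans_eq ?_
  rw [add_sub_cancel_left, abs_mul, abs_mul, abs_mul, abs_two]
  ring

lemma abs_integral_kingmanConv_sub_bulletConv_le (hf : RootLipschitz L f) {μ : ℝ} (hμ : 1 / 2 < μ)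
    {ν₁ ν₂ : Measure ℝ} [SFinite ν₁] [SFinite ν₂] (h₁ : Integrable (fun x => x) ν₁)
    (h₂ : Integrable (fun x => x) ν₂) :
    |(∫ x, f x ∂(kingmanConv μ ν₁ ν₂)) - ∫ x, f x ∂(bulletConv ν₁ ν₂)| ≤
      2 * L * ((∫ x, |x| ∂ν₁) * ((∫ x, |x| ∂ν₂) * ∫ v, |v| ∂ultraspherical μ)) := by
  have := isProbabilityMeasure_ultraspherical hμ
  have hV := memLp_one_iff_integrable.1 (memLp_id_ultraspherical hμ 1)
  have hV_mem : ∀ᵐ p ∂ν₁.prod (ν₂.prod (ultraspherical μ)), p.2.2 ∈ Set.Icc (-1 : ℝ) 1 :=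
    Measure.quasiMeasurePreserving_snd.ae
      (Measure.quasiMeasurePreserving_snd.ae (ae_mem_Icc_ultraspherical μ))
  have hf_comp {q : ℝ × ℝ × ℝ → ℝ} (hq : Measurable q) : Measurable fun p => f (√(q p)) :=
    hf.continuous_comp_sqrt.measurable.comp hq
  rw [kingmanConv_eq_map, bulletConv_eq_map ν₁ ν₂ (ultraspherical μ),
    hf.integral_map_sqrt (by fun_prop), hf.integral_map_sqrt (by fun_prop)]
  calc |_|
    _ ≤ ∫ p : ℝ × ℝ × ℝ, 2 * L * (|p.1| * (|p.2.1| * |p.2.2|))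
          ∂ν₁.prod (ν₂.prod (ultraspherical μ)) :=
      norm_integral_sub_integral_le
        ((hf_comp (by fun_prop)).sub (hf_comp (by fun_prop))).aestronglyMeasurable
        ((h₁.abs.mul_prod (h₂.abs.mul_prod hV.abs)).const_mul _)
        (hV_mem.mono fun p hp => hf.abs_sub_le _ _ hp)
    _ = 2 * L * ((∫ x, |x| ∂ν₁) * ((∫ x, |x| ∂ν₂) * ∫ v, |v| ∂ultraspherical μ)) := by
      rw [integral_const_mul, integral_prod_mul (fun x : ℝ => |x|) fun q : ℝ × ℝ => |q.1| * |q.2|,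
        integral_prod_mul (fun x : ℝ => |x|) fun x : ℝ => |x|]

end RootLipschitz

theorem conv_comparison_general {μ : ℝ} (hμ : 1 / 2 < μ) {ν₁ ν₂ : Measure ℝ} [SFinite ν₁]
    [SFinite ν₂] (h₁ : Integrable (fun x => x) ν₁) (h₂ : Integrable (fun x => x) ν₂)
    {f : ℝ → ℝ} {L : ℝ} (hf : RootLipschitz L f) :
    |(∫ x, f x ∂(kingmanConv μ ν₁ ν₂)) - ∫ x, f x ∂(bulletConv ν₁ ν₂)|
      ≤ √2 * L * (∫ x, |x| ∂ν₁) * (∫ x, |x| ∂ν₂) / √μ := by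
  have hL := hf.nonneg
  calc |_|
    _ ≤ 2 * L * ((∫ x, |x| ∂ν₁) * ((∫ x, |x| ∂ν₂) * ∫ v, |v| ∂ultraspherical μ)) :=
      hf.abs_integral_kingmanConv_sub_bulletConv_le hμ h₁ h₂
    _ ≤ 2 * L * ((∫ x, |x| ∂ν₁) * ((∫ x, |x| ∂ν₂) * (1 / √(2 * μ)))) := by
      gcongr
      exact integral_abs_ultraspherical_le hμ
    _ = (2 / √2) * L * (∫ x, |x| ∂ν₁) * (∫ x, |x| ∂ν₂) / √μ := by
      rw [Real.sqrt_mul zero_le_two]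
      ring
    _ = √2 * L * (∫ x, |x| ∂ν₁) * (∫ x, |x| ∂ν₂) / √μ := by rw [Real.div_sqrt]

/-- Comparison of the Kingman–Bessel convolution with the `•`-convolution:
`|ν₁ *_μ ν₂(f) - ν₁ • ν₂(f)| ≤ C L m₁(ν₁) m₁(ν₂) / √μ` for root-Lipschitz `f`. -/
theorem conv_comparison :
    ∃ C > (0 : ℝ), ∀ μ : ℝ, μ ≥ 3 →
      ∀ ν₁ ν₂ : Measure ℝ, IsProbabilityMeasure ν₁ → IsProbabilityMeasure ν₂ →
        ν₁ (Set.Iio 0) = 0 → ν₂ (Set.Iio 0) = 0 →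
        Integrable (fun x => x) ν₁ → Integrable (fun x => x) ν₂ →
        ∀ (f : ℝ → ℝ) (L : ℝ), Measurable f →
          (∀ x y : ℝ, 0 ≤ x → 0 ≤ y →
            |f (Real.sqrt x) - f (Real.sqrt y)| ≤ L * |x - y|) →
          |(∫ x, f x ∂(kingmanConv μ ν₁ ν₂)) - ∫ x, f x ∂(bulletConv ν₁ ν₂)|
            ≤ C * L * (∫ x, x ∂ν₁) * (∫ x, x ∂ν₂) / Real.sqrt μ := by
  refine ⟨√2, by positivity, fun μ hμ ν₁ ν₂ _ _ hν₁ hν₂ h₁ h₂ f L _ hf => ?_⟩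
  rw [← integral_abs_of_Iio_null hν₁, ← integral_abs_of_Iio_null hν₂]
  exact conv_comparison_general (by linarith) h₁ h₂ hf
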